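/- Every solution of the dichotomous system converges to a multiple of the growing mode: Under the hypotheses of the previous statement (β > 0, γ ∈ (1/2,1), R integrable), there is a linear functional Φ : ℂ² → ℂ with one-dimensional kernel such that for every f ∈ ℂ², the solution u(·,f) with u(0,f) = f satisfies u(x,f) = exp(β x^{1−γ}/(1−γ)) (Φ(f) e₊ + o(1)) as x → +∞; moreover Φ(f) = ⟨ f + ∫₀^∞ exp(−β x^{1−γ}/(1−γ)) R(x) u(x,f) dx , e₊ ⟩. -/

import Mathlib

open MeasureTheory Real Filter Topology

/-!
Let `φ(x) = ∫₀ˣ a` and `v = exp (-φ) u`. Variation of constants splits `v` into a growing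
component `P v(y) = P v(x) + ∫ P R v` and a decaying one, in which the data at time `t` enter with
the factor `exp (-2 (φ(y) - φ(t))) ≤ 1`. Grönwall bounds `v` by a multiple of `v(x)`, uniformly in
`x ≤ y`; hence `R v` is integrable, `P v` converges to `P (v(x) + ∫ₓ^∞ R v)`, and `(1 - P) v` tends
to `0` by dominated convergence. For `x = 0` this is the functional. The limit does not depend on
`x`, and for `x` so large that `∫ₓ^∞ ‖R‖` is small, it cannot vanish on a solution with `v(x) ≠ 0`
in the range of `P`. Such a solution exists by Picard iteration, so the functional is not zero.
-/

section AbsoluteContinuity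

variable {F : Type*} [NormedAddCommGroup F] [NormedSpace ℝ F] {a b : ℝ}

theorem absolutelyContinuousOnInterval_comp_of_lipschitzOnWith {X Y : Type*} [PseudoMetricSpace X]
    [PseudoMetricSpace Y] {f : ℝ → X} {g : X → Y} {s : Set X} {K : NNReal}
    (hg : LipschitzOnWith K g s) (hf : AbsolutelyContinuousOnInterval f a b)
    (hfs : Set.MapsTo f (Set.uIcc a b) s) :
    AbsolutelyContinuousOnInterval (fun x => g (f x)) a b := by
  have hbound : Tendsto (fun E : ℕ × (ℕ → ℝ × ℝ) =>
      (K : ℝ) * ∑ i ∈ Finset.range E.1, dist (f (E.2 i).1) (f (E.2 i).2))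
      (AbsolutelyContinuousOnInterval.totalLengthFilter ⊓
        𝓟 (AbsolutelyContinuousOnInterval.disjWithin a b)) (𝓝 0) := by
    simpa only [mul_zero] using Tendsto.const_mul (K : ℝ) hf
  refine squeeze_zero' (Eventually.of_forall fun E => Finset.sum_nonneg fun _ _ => dist_nonneg)
    ?_ hbound
  filter_upwards [mem_inf_of_right (mem_principal_self _)] with E hE
  rw [Finset.mul_sum]
  exact Finset.sum_le_sum fun i hi =>
    hg.dist_le_mul _ (hfs (hE.1 i hi).1) _ (hfs (hE.1 i hi).2)

theorem absolutelyContinuousOnInterval_exp {f : ℝ → ℝ}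
    (hf : AbsolutelyContinuousOnInterval f a b) :
    AbsolutelyContinuousOnInterval (fun x => exp (f x)) a b := by
  obtain ⟨C, hC⟩ := hf.exists_bound
  obtain ⟨K, hK⟩ : ∃ K, LipschitzOnWith K exp (Set.Icc (-C) C) :=
    Real.contDiff_exp.contDiffOn.exists_lipschitzOnWith one_ne_zero (convex_Icc _ _) isCompact_Icc
  have hmaps : Set.MapsTo f (Set.uIcc a b) (Set.Icc (-C) C) := fun x hx => abs_le.1 (hC x hx)
  exact absolutelyContinuousOnInterval_comp_of_lipschitzOnWith hK hf hmaps

theorem absolutelyContinuousOnInterval_const_add_integral (c : F) {f : ℝ → F}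
    (hf : IntervalIntegrable f volume a b) :
    AbsolutelyContinuousOnInterval (fun x => c + ∫ t in a..x, f t) a b := by
  have hnorm := hf.norm.absolutelyContinuousOnInterval_intervalIntegral
    (Set.left_mem_uIcc (a := a) (b := b))
  refine squeeze_zero' (Eventually.of_forall fun E => Finset.sum_nonneg fun _ _ => dist_nonneg)
    ?_ hnorm
  filter_upwards [mem_inf_of_right (mem_principal_self _)] with E hE
  refine Finset.sum_le_sum fun i hi => ?_
  have hsub : ∀ {x}, x ∈ Set.uIcc a b → IntervalIntegrable f volume a x := fun hx =>
    hf.mono_set (Set.uIcc_subset_uIcc_left hx)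
  obtain ⟨h₁, h₂⟩ := hE.1 i hi
  rw [dist_add_left, dist_eq_norm, Real.dist_eq,
    intervalIntegral.integral_interval_sub_left (hsub h₁) (hsub h₂),
    intervalIntegral.integral_interval_sub_left (hsub h₁).norm (hsub h₂).norm]
  exact intervalIntegral.norm_integral_le_abs_integral_norm

variable [CompleteSpace F]

theorem integral_eq_sub_of_absolutelyContinuousOnInterval {W f : ℝ → F}
    (hW : AbsolutelyContinuousOnInterval W a b) (hf : IntervalIntegrable f volume a b)
    (hderiv : ∀ᵐ x, x ∈ Set.uIcc a b → HasDerivAt W (f x) x) :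
    ∫ t in a..b, f t = W b - W a := by
  have hdiff : AbsolutelyContinuousOnInterval (fun x => W x - (0 + ∫ t in a..x, f t)) a b :=
    hW.sub (absolutelyContinuousOnInterval_const_add_integral 0 hf)
  obtain ⟨C, hC⟩ := hdiff.const_of_ae_hasDerivAt_zero <| by
    filter_upwards [hderiv, hf.ae_hasDerivAt_integral] with x hWx hfx hx
    simpa only [sub_self] using
      (hWx hx).fun_sub ((hfx hx a Set.left_mem_uIcc).const_add 0)
  have ha := hC a Set.left_mem_uIcc
  have hb := hC b Set.right_mem_uIcc
  rw [intervalIntegral.integral_same, add_zero, sub_zero] at ha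
  rw [ha, ← hb, zero_add, sub_sub_cancel]

theorem exp_neg_smul_eq_add_integral {φ n : ℝ → ℝ} {W r : ℝ → F}
    (hn : IntervalIntegrable n volume a b)
    (hφ : ∀ z ∈ Set.uIcc a b, φ z = φ a + ∫ t in a..z, n t)
    (hint : IntervalIntegrable (fun t => n t • W t + r t) volume a b)
    (hW : ∀ z ∈ Set.uIcc a b, W z = W a + ∫ t in a..z, (n t • W t + r t)) :
    exp (-φ b) • W b = exp (-φ a) • W a + ∫ t in a..b, exp (-φ t) • r t := by
  -- `φ` and `W` are only known between `a` and `b`, so the right-hand sides of their integral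
  -- equations are differentiated instead.
  set φ' : ℝ → ℝ := fun z => φ a + ∫ t in a..z, n t
  set W' : ℝ → F := fun z => W a + ∫ t in a..z, (n t • W t + r t)
  have hφac : AbsolutelyContinuousOnInterval (fun z => exp (-φ' z)) a b :=
    absolutelyContinuousOnInterval_exp
      (absolutelyContinuousOnInterval_const_add_integral (φ a) hn).neg
  have hWac : AbsolutelyContinuousOnInterval W' a b :=
    absolutelyContinuousOnInterval_const_add_integral (W a) hint
  have hr : IntervalIntegrable r volume a b := by
    simpa only [add_sub_cancel_left] using
      hint.sub (hn.smul_continuousOn (hWac.continuousOn.congr hW))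
  have hftc := integral_eq_sub_of_absolutelyContinuousOnInterval (hφac.smul hWac)
    (hr.continuousOn_smul hφac.continuousOn) <| by
      filter_upwards [hn.ae_hasDerivAt_integral, hint.ae_hasDerivAt_integral] with x hφx hWx hx
      have hφ' : HasDerivAt φ' (n x) x := (hφx hx a Set.left_mem_uIcc).const_add _
      have hW' : HasDerivAt W' (n x • W x + r x) x := (hWx hx a Set.left_mem_uIcc).const_add _
      have hW'x : W' x = W x := (hW x hx).symm
      refine (hφ'.fun_neg.exp.smul hW').congr_deriv ?_
      rw [hW'x]
      module
  have hφ' : ∀ z ∈ Set.uIcc a b, exp (-φ' z) = exp (-φ z) := fun z hz => by rw [hφ z hz]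
  have hW' : ∀ z ∈ Set.uIcc a b, W' z = W z := fun z hz => (hW z hz).symm
  rw [intervalIntegral.integral_congr fun z hz => congrArg (· • r z) (hφ' z hz)] at hftc
  rw [hftc, Pi.smul_apply', Pi.smul_apply', hφ' a Set.left_mem_uIcc, hφ' b Set.right_mem_uIcc,
    hW' a Set.left_mem_uIcc, hW' b Set.right_mem_uIcc, add_sub_cancel]

end AbsoluteContinuity

section Gronwall

variable {a b : ℝ} {n : ℝ → ℝ}

theorem integral_mul_exp_integral (hn : IntervalIntegrable n volume a b) :
    ∫ t in a..b, n t * exp (∫ s in a..t, n s) = exp (∫ s in a..b, n s) - 1 := by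
  have h := exp_neg_smul_eq_add_integral (φ := fun z => - ∫ t in a..z, n t) (n := fun t => -n t)
    (W := fun _ => (1 : ℝ)) (r := n) hn.neg (by simp) (by simp) (by simp)
  simp only [neg_neg, smul_eq_mul, mul_one, intervalIntegral.integral_same, exp_zero] at h
  rw [h, add_sub_cancel_left]
  simp only [mul_comm]

theorem abs_integral_mul_exp_abs_integral (hn : IntervalIntegrable n volume a b)
    (hn₀ : ∀ t, 0 ≤ n t) :
    |∫ t in a..b, n t * exp (|∫ s in a..t, n s|)| = exp |∫ s in a..b, n s| - 1 := by
  have hprim_nonneg : ∀ {c d}, c ≤ d → 0 ≤ ∫ s in c..d, n s := fun h =>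
    intervalIntegral.integral_nonneg h fun t _ => hn₀ t
  rcases le_total a b with hab | hba
  · have habs : ∀ t ∈ Set.uIcc a b, |∫ s in a..t, n s| = ∫ s in a..t, n s := fun t ht =>
      abs_of_nonneg (hprim_nonneg (Set.uIcc_of_le hab ▸ ht).1)
    rw [intervalIntegral.integral_congr fun t ht => by rw [habs t ht],
      integral_mul_exp_integral hn, habs b Set.right_mem_uIcc, abs_of_nonneg]
    exact sub_nonneg.2 (one_le_exp (hprim_nonneg hab))
  · have habs : ∀ t ∈ Set.uIcc a b, |∫ s in a..t, n s| = ∫ s in a..t, -n s := fun t ht => by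
      rw [intervalIntegral.integral_neg, abs_of_nonpos]
      rw [intervalIntegral.integral_symm]
      exact neg_nonpos.2 (hprim_nonneg (Set.uIcc_of_ge hba ▸ ht).2)
    rw [intervalIntegral.integral_congr fun t ht => by rw [habs t ht], ← abs_neg,
      ← intervalIntegral.integral_neg]
    simp only [← neg_mul]
    rw [integral_mul_exp_integral (n := fun t => -n t) hn.neg, habs b Set.right_mem_uIcc,
      abs_of_nonneg]
    rw [← habs b Set.right_mem_uIcc]
    exact sub_nonneg.2 (one_le_exp (abs_nonneg _))

theorem le_mul_exp_integral_of_le_add_integral (hab : a ≤ b)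
    (hn : IntervalIntegrable n volume a b) (hn₀ : ∀ t, 0 ≤ n t) {m : ℝ → ℝ} {c : ℝ}
    (hm : ContinuousOn m (Set.Icc a b))
    (hle : ∀ z ∈ Set.Icc a b, m z ≤ c + ∫ t in a..z, n t * m t) :
    m b ≤ c * exp (∫ t in a..b, n t) := by
  have hnm : IntervalIntegrable (fun t => n t * m t) volume a b :=
    hn.mul_continuousOn (Set.uIcc_of_le hab ▸ hm)
  have h := exp_neg_smul_eq_add_integral (φ := fun z => ∫ t in a..z, n t)
    (W := fun z => c + ∫ t in a..z, n t * m t)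
    (r := fun z => n z * (m z - (c + ∫ t in a..z, n t * m t))) hn (by simp)
    (by simpa [mul_sub] using hnm)
    (by simp [mul_sub])
  have hint_nonpos :
      ∫ t in a..b, exp (-∫ s in a..t, n s) * (n t * (m t - (c + ∫ s in a..t, n s * m s))) ≤ 0 := by
    rw [← neg_nonneg, ← intervalIntegral.integral_neg]
    refine intervalIntegral.integral_nonneg hab fun t ht => neg_nonneg.2 ?_
    exact mul_nonpos_of_nonneg_of_nonpos (exp_pos _).le
      (mul_nonpos_of_nonneg_of_nonpos (hn₀ t) (sub_nonpos.2 (hle t ht)))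
  simp only [smul_eq_mul, intervalIntegral.integral_same, neg_zero, exp_zero, one_mul,
    add_zero, exp_neg, ← div_eq_inv_mul] at h hint_nonpos
  refine (hle b (Set.right_mem_Icc.2 hab)).trans ((div_le_iff₀ (exp_pos _)).1 ?_)
  rw [h]
  exact add_le_of_nonpos_right hint_nonpos

end Gronwall

section Picard

variable {𝕜 E : Type*} [NontriviallyNormedField 𝕜] [NormedAddCommGroup E] [NormedSpace 𝕜 E]
  {A : ℝ → E →L[𝕜] E} {a b : ℝ}

theorem intervalIntegrable_clm_apply {k : ℝ → E} (hA : IntervalIntegrable A volume a b)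
    (hk : ContinuousOn k (Set.uIcc a b)) : IntervalIntegrable (fun t => A t (k t)) volume a b := by
  obtain ⟨C, hC⟩ := isCompact_uIcc.exists_bound_of_continuousOn hk
  have hkmeas : AEStronglyMeasurable k (volume.restrict (Set.uIoc a b)) :=
    (hk.mono Set.uIoc_subset_uIcc).aestronglyMeasurable measurableSet_uIoc
  refine (hA.norm.mul_const C).mono_fun
    ((ContinuousLinearMap.id 𝕜 _).aestronglyMeasurable_comp₂
      hA.def'.aestronglyMeasurable hkmeas) ?_
  filter_upwards [ae_restrict_mem measurableSet_uIoc] with t ht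
  calc ‖A t (k t)‖ ≤ ‖A t‖ * C :=
        (A t).le_opNorm_of_le (hC t (Set.uIoc_subset_uIcc ht))
    _ ≤ ‖‖A t‖ * C‖ := le_norm_self _

/-- The exponential weight that turns Picard iteration from `x₀` into a contraction by `1 / 2` on
the whole line. -/
noncomputable def picardWeight (A : ℝ → E →L[𝕜] E) (x₀ x : ℝ) : ℝ :=
  |∫ s in x₀..x, 2 * ‖A s‖|

theorem continuous_picardWeight (hA : ∀ a b, IntervalIntegrable A volume a b) (x₀ : ℝ) :
    Continuous (picardWeight A x₀) :=
  (intervalIntegral.continuous_primitive (fun a b => (hA a b).norm.const_mul 2) x₀).abs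

variable [NormedSpace ℝ E]

theorem norm_integral_clm_apply_le_of_picardWeight {k : ℝ → E} {d : ℝ}
    (hA : IntervalIntegrable A volume a b) (hk : ∀ t, ‖k t‖ ≤ d * exp (picardWeight A a t)) :
    ‖∫ t in a..b, A t (k t)‖ ≤ d / 2 * (exp (picardWeight A a b) - 1) := by
  have hn : IntervalIntegrable (fun t => 2 * ‖A t‖) volume a b := hA.norm.const_mul 2
  have hd : 0 ≤ d := by simpa [picardWeight] using (norm_nonneg _).trans (hk a)
  have hint : IntervalIntegrable (fun t => 2 * ‖A t‖ * exp (picardWeight A a t)) volume a b :=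
    hn.mul_continuousOn (continuous_exp.comp_continuousOn
      (intervalIntegral.continuousOn_primitive_interval' hn Set.left_mem_uIcc).abs)
  calc ‖∫ t in a..b, A t (k t)‖
      ≤ |∫ t in a..b, d / 2 * (2 * ‖A t‖ * exp (picardWeight A a t))| := by
        refine intervalIntegral.norm_integral_le_abs_of_norm_le (Eventually.of_forall fun t => ?_)
          (hint.const_mul _)
        calc ‖A t (k t)‖ ≤ ‖A t‖ * (d * exp (picardWeight A a t)) := (A t).le_opNorm_of_le (hk t)
          _ = d / 2 * (2 * ‖A t‖ * exp (picardWeight A a t)) := by ring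
    _ = d / 2 * |∫ t in a..b, 2 * ‖A t‖ * exp (picardWeight A a t)| := by
        rw [intervalIntegral.integral_const_mul, abs_mul, abs_of_nonneg (by positivity)]
    _ = d / 2 * (exp (picardWeight A a b) - 1) := by
        congr 1
        exact abs_integral_mul_exp_abs_integral hn fun t => by positivity

/-- The Picard operator `u ↦ f + ∫ A u` of the initial value problem `u(x₀) = f`, conjugated by
`exp (picardWeight A x₀)`: a fixed point `g` gives the solution `exp (picardWeight A x₀) • g`. -/
noncomputable def weightedPicard (A : ℝ → E →L[𝕜] E) (x₀ : ℝ) (f : E) (g : ℝ → E) (x : ℝ) : E :=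
  exp (-picardWeight A x₀ x) • (f + ∫ t in x₀..x, A t (exp (picardWeight A x₀ t) • g t))

variable {x₀ : ℝ} {f : E} {g h : ℝ → E}

theorem intervalIntegrable_weightedPicard_integrand (hA : ∀ a b, IntervalIntegrable A volume a b)
    (hg : Continuous g) (a b : ℝ) :
    IntervalIntegrable (fun t => A t (exp (picardWeight A x₀ t) • g t)) volume a b :=
  intervalIntegrable_clm_apply (hA a b)
    ((continuous_exp.comp (continuous_picardWeight hA x₀)).smul hg).continuousOn

theorem continuous_weightedPicard (hA : ∀ a b, IntervalIntegrable A volume a b)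
    (hg : Continuous g) : Continuous (weightedPicard A x₀ f g) :=
  (continuous_exp.comp (continuous_picardWeight hA x₀).neg).smul (continuous_const.add
    (intervalIntegral.continuous_primitive (intervalIntegrable_weightedPicard_integrand hA hg) x₀))

theorem norm_weightedPicard_sub_le (hA : ∀ a b, IntervalIntegrable A volume a b)
    (hg : Continuous g) (hh : Continuous h) {d : ℝ} (hd : ∀ t, ‖g t - h t‖ ≤ d) (x : ℝ) :
    ‖weightedPicard A x₀ f g x - weightedPicard A x₀ f h x‖ ≤ d / 2 := by
  have hd₀ : 0 ≤ d := (norm_nonneg _).trans (hd x)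
  have hsub : weightedPicard A x₀ f g x - weightedPicard A x₀ f h x =
      exp (-picardWeight A x₀ x) •
        ∫ t in x₀..x, A t (exp (picardWeight A x₀ t) • (g t - h t)) := by
    simp only [weightedPicard, ← smul_sub, add_sub_add_left_eq_sub,
      ← intervalIntegral.integral_sub (intervalIntegrable_weightedPicard_integrand hA hg x₀ x)
        (intervalIntegrable_weightedPicard_integrand hA hh x₀ x)]
    simp only [smul_sub, map_sub]
  have hbound : ‖∫ t in x₀..x, A t (exp (picardWeight A x₀ t) • (g t - h t))‖ ≤
      d / 2 * (exp (picardWeight A x₀ x) - 1) := by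
    refine norm_integral_clm_apply_le_of_picardWeight (hA x₀ x) fun t => ?_
    rw [norm_smul, norm_of_nonneg (exp_pos _).le, mul_comm]
    gcongr
    exact hd t
  calc ‖weightedPicard A x₀ f g x - weightedPicard A x₀ f h x‖
      ≤ exp (-picardWeight A x₀ x) * (d / 2 * (exp (picardWeight A x₀ x) - 1)) := by
        rw [hsub, norm_smul, norm_of_nonneg (exp_pos _).le]
        gcongr
    _ ≤ exp (-picardWeight A x₀ x) * (d / 2 * exp (picardWeight A x₀ x)) := by
        gcongr
        exact sub_le_self _ zero_le_one
    _ = d / 2 := by rw [mul_left_comm, ← exp_add, neg_add_cancel, exp_zero, mul_one]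

theorem norm_weightedPicard_le (hA : ∀ a b, IntervalIntegrable A volume a b) (hg : Continuous g)
    {d : ℝ} (hd : ∀ t, ‖g t‖ ≤ d) (x : ℝ) : ‖weightedPicard A x₀ f g x‖ ≤ ‖f‖ + d / 2 := by
  have hzero : ‖weightedPicard A x₀ f 0 x‖ ≤ ‖f‖ := by
    simp only [weightedPicard, Pi.zero_apply, smul_zero, map_zero,
      intervalIntegral.integral_zero, add_zero, norm_smul, norm_of_nonneg (exp_pos _).le]
    exact mul_le_of_le_one_left (norm_nonneg f) (exp_le_one_iff.2 (neg_nonpos.2 (abs_nonneg _)))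
  have hdiff : ‖weightedPicard A x₀ f g x - weightedPicard A x₀ f 0 x‖ ≤ d / 2 :=
    norm_weightedPicard_sub_le hA hg continuous_zero (by simpa using hd) x
  exact (norm_le_norm_add_norm_sub' _ _).trans (add_le_add hzero hdiff)

open BoundedContinuousFunction in
theorem exists_continuous_eq_add_integral [CompleteSpace E]
    (hA : ∀ a b, IntervalIntegrable A volume a b) (x₀ : ℝ) (f : E) :
    ∃ u : ℝ → E, Continuous u ∧ ∀ x, u x = f + ∫ t in x₀..x, A t (u t) := by
  let T : (ℝ →ᵇ E) → (ℝ →ᵇ E) := fun g => ofNormedAddCommGroup (weightedPicard A x₀ f g)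
    (continuous_weightedPicard hA g.continuous) (‖f‖ + ‖g‖ / 2)
    (norm_weightedPicard_le hA g.continuous g.norm_coe_le_norm)
  have hT : ContractingWith (1 / 2) T := by
    refine ⟨NNReal.half_lt_self one_ne_zero, LipschitzWith.of_dist_le_mul fun g h => ?_⟩
    refine (BoundedContinuousFunction.dist_le (by positivity)).2 fun x => ?_
    rw [dist_eq_norm]
    have hgh : ∀ t, ‖g t - h t‖ ≤ dist g h := fun t => dist_eq_norm (g t) (h t) ▸ dist_coe_le_dist t
    exact (norm_weightedPicard_sub_le hA g.continuous h.continuous hgh x).trans_eq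
      (by push_cast; ring)
  obtain ⟨g, hg⟩ : ∃ g, T g = g := ⟨hT.fixedPoint, hT.fixedPoint_isFixedPt⟩
  refine ⟨fun t => exp (picardWeight A x₀ t) • g t,
    (continuous_exp.comp (continuous_picardWeight hA x₀)).smul g.continuous, fun x => ?_⟩
  have hgx : weightedPicard A x₀ f g x = g x := DFunLike.congr_fun hg x
  calc exp (picardWeight A x₀ x) • g x
      = exp (picardWeight A x₀ x) • weightedPicard A x₀ f g x := by rw [hgx]
    _ = f + ∫ t in x₀..x, A t (exp (picardWeight A x₀ t) • g t) := by
        rw [weightedPicard, smul_smul, ← exp_add, add_neg_cancel, exp_zero, one_smul]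

end Picard

section IntegralSolution

variable {𝕜 E : Type*} [NontriviallyNormedField 𝕜] [NormedAddCommGroup E] [NormedSpace 𝕜 E]
  [NormedSpace ℝ E] {A : ℝ → E →L[𝕜] E} {u v : ℝ → E}

theorem intervalIntegrable_of_locallyIntegrableOn_Ici {F : Type*} [NormedAddCommGroup F]
    {f : ℝ → F} {c x y : ℝ} (hf : LocallyIntegrableOn f (Set.Ici c)) (hx : c ≤ x) (hy : c ≤ y) :
    IntervalIntegrable f volume x y :=
  (hf.integrableOn_compact_subset (Set.ordConnected_Ici.uIcc_subset hx hy)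
    isCompact_uIcc).intervalIntegrable

theorem continuousOn_Ici_of_eq_add_integral {F : Type*} [NormedAddCommGroup F] [NormedSpace ℝ F]
    {w f : ℝ → F} {c : ℝ} (hf : ∀ y, c ≤ y → IntervalIntegrable f volume c y)
    (hw : ∀ y, c ≤ y → w y = w c + ∫ t in c..y, f t) : ContinuousOn w (Set.Ici c) := by
  intro x hx
  have hcx : c ≤ x + 1 := hx.out.trans (lt_add_one x).le
  have hIcc : ContinuousOn w (Set.Icc c (x + 1)) := by
    rw [← Set.uIcc_of_le hcx]
    refine (continuousOn_const.add (intervalIntegral.continuousOn_primitive_interval' (hf _ hcx)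
      Set.left_mem_uIcc)).congr fun y hy => hw y (Set.uIcc_of_le hcx ▸ hy).1
  refine (hIcc x ⟨hx, (lt_add_one x).le⟩).mono_of_mem_nhdsWithin ?_
  exact Filter.mem_of_superset (inter_mem_nhdsWithin _ (Iic_mem_nhds (lt_add_one x)))
    fun y hy => hy

/-- Solutions on `[0, ∞)` of `u' = A u` in integrated form; local integrability of `A u` is not part
of the definition because it follows from that of `A`. -/
def IsIntegralSolution (A : ℝ → E →L[𝕜] E) (u : ℝ → E) : Prop :=
  ∀ x y, 0 ≤ x → 0 ≤ y → u y = u x + ∫ t in x..y, A t (u t)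

theorem exists_isIntegralSolution [CompleteSpace E] (hA : LocallyIntegrableOn A (Set.Ici 0))
    (x₀ : ℝ) (f : E) : ∃ u, IsIntegralSolution A u ∧ u x₀ = f := by
  have hB : ∀ a b, IntervalIntegrable ((Set.Ici 0).indicator A) volume a b := fun a b => by
    have h := hA.integrableOn_compact_subset (Set.inter_subset_right)
      (isCompact_uIcc (a := a) (b := b) |>.inter_right isClosed_Ici)
    rw [Set.inter_comm] at h
    exact ((integrableOn_indicator_iff measurableSet_Ici).2 h).intervalIntegrable
  obtain ⟨u, hucont, hu⟩ := exists_continuous_eq_add_integral hB x₀ f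
  have hint : ∀ a b, IntervalIntegrable (fun t => (Set.Ici 0).indicator A t (u t)) volume a b :=
    fun a b => intervalIntegrable_clm_apply (hB a b) hucont.continuousOn
  refine ⟨u, fun x y hx hy => ?_, by simpa using hu x₀⟩
  have hcongr : ∫ t in x..y, A t (u t) = ∫ t in x..y, (Set.Ici 0).indicator A t (u t) :=
    intervalIntegral.integral_congr fun t ht => by
      simp only [Set.indicator_of_mem (Set.ordConnected_Ici.uIcc_subset hx hy ht)]
  rw [hcongr, hu x, add_assoc, intervalIntegral.integral_add_adjacent_intervals (hint _ _)
    (hint _ _), ← hu y]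

namespace IsIntegralSolution

theorem intervalIntegrable (hu : IsIntegralSolution A u) (hA : LocallyIntegrableOn A (Set.Ici 0))
    {x y : ℝ} (hx : 0 ≤ x) (hy : 0 ≤ y) : IntervalIntegrable (fun t => A t (u t)) volume x y := by
  -- A non-integrable `A u` would have integral `0` by convention, making `u` constant and so `A u`
  -- integrable.
  by_contra hnot
  have hconst : ∀ z, 0 ≤ z → u z = u y := fun z hz => by
    by_cases hxz : IntervalIntegrable (fun t => A t (u t)) volume x z
    · rw [hu z y hz hy, intervalIntegral.integral_undef fun hzy => hnot (hxz.trans hzy), add_zero]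
    · rw [hu x z hx hz, hu x y hx hy, intervalIntegral.integral_undef hxz,
        intervalIntegral.integral_undef hnot]
  refine hnot ((intervalIntegrable_clm_apply (k := fun _ => u y)
    (intervalIntegrable_of_locallyIntegrableOn_Ici hA hx hy) continuousOn_const).congr ?_)
  exact fun t ht => congrArg (A t) (hconst t (ht.1.le.trans' (le_min hx hy))).symm

theorem continuousOn (hu : IsIntegralSolution A u) (hA : LocallyIntegrableOn A (Set.Ici 0)) :
    ContinuousOn u (Set.Ici 0) :=
  continuousOn_Ici_of_eq_add_integral (fun _ hy => hu.intervalIntegrable hA le_rfl hy)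
    fun y hy => hu 0 y le_rfl hy

theorem add (hu : IsIntegralSolution A u) (hv : IsIntegralSolution A v)
    (hA : LocallyIntegrableOn A (Set.Ici 0)) : IsIntegralSolution A (u + v) := by
  intro x y hx hy
  simp only [Pi.add_apply, map_add]
  rw [intervalIntegral.integral_add (hu.intervalIntegrable hA hx hy)
    (hv.intervalIntegrable hA hx hy), hu x y hx hy, hv x y hx hy, add_add_add_comm]

theorem smul [SMulCommClass ℝ 𝕜 E] (hu : IsIntegralSolution A u) (c : 𝕜) :
    IsIntegralSolution A (c • u) := by
  intro x y hx hy
  simp only [Pi.smul_apply, map_smul]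
  rw [intervalIntegral.integral_smul, ← smul_add, ← hu x y hx hy]

end IsIntegralSolution

end IntegralSolution

section Phase

/-- `φ` is the phase `x ↦ ∫₀ˣ a` of a growth rate `a` on `[0, ∞)`, increasing to infinity, so that
`exp φ` and `exp (-φ)` are the growing and the decaying solution of the unperturbed system. -/
structure IsPhase (a φ : ℝ → ℝ) : Prop where
  locallyIntegrableOn : LocallyIntegrableOn a (Set.Ici 0)
  eq_integral : ∀ x, 0 ≤ x → φ x = ∫ t in 0..x, a t
  monotoneOn : MonotoneOn φ (Set.Ici 0)
  tendsto_atTop : Tendsto φ atTop atTop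

namespace IsPhase

variable {a φ : ℝ → ℝ} (hφ : IsPhase a φ)
include hφ

theorem intervalIntegrable {x y : ℝ} (hx : 0 ≤ x) (hy : 0 ≤ y) : IntervalIntegrable a volume x y :=
  intervalIntegrable_of_locallyIntegrableOn_Ici hφ.locallyIntegrableOn hx hy

theorem eq_add_integral {x y : ℝ} (hx : 0 ≤ x) (hy : 0 ≤ y) : φ y = φ x + ∫ t in x..y, a t := by
  rw [hφ.eq_integral x hx, hφ.eq_integral y hy, intervalIntegral.integral_add_adjacent_intervals
    (hφ.intervalIntegrable le_rfl hx) (hφ.intervalIntegrable hx hy)]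

theorem apply_zero : φ 0 = 0 := by
  rw [hφ.eq_integral 0 le_rfl, intervalIntegral.integral_same]

theorem continuousOn : ContinuousOn φ (Set.Ici 0) :=
  continuousOn_Ici_of_eq_add_integral (fun _ hy => hφ.intervalIntegrable le_rfl hy)
    fun _ hy => hφ.eq_add_integral le_rfl hy

theorem tendsto_exp_atTop_zero (t : ℝ) :
    Tendsto (fun y => exp (-2 * (φ y - φ t))) atTop (𝓝 0) :=
  tendsto_exp_atBot.comp ((tendsto_atTop_add_const_right _ (-φ t)
    hφ.tendsto_atTop).const_mul_atTop_of_neg (by norm_num))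

variable {E : Type*} [NormedAddCommGroup E] [NormedSpace ℝ E]

theorem norm_exp_smul_le {s y : ℝ} (hs : 0 ≤ s) (hsy : s ≤ y) (z : E) :
    ‖exp (-2 * (φ y - φ s)) • z‖ ≤ ‖z‖ := by
  rw [norm_smul, norm_of_nonneg (exp_pos _).le]
  refine mul_le_of_le_one_left (norm_nonneg z) (exp_le_one_iff.2 ?_)
  linarith [hφ.monotoneOn hs (hs.trans hsy) hsy]

theorem tendsto_integral_exp_smul_zero {g : ℝ → E} (hg : IntegrableOn g (Set.Ioi 0)) :
    Tendsto (fun y => ∫ t in 0..y, exp (-2 * (φ y - φ t)) • g t) atTop (𝓝 0) := by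
  let G : ℝ → ℝ → E := fun y => (Set.Iic y).indicator fun t => exp (-2 * (φ y - φ t)) • g t
  have hG : ∀ᶠ y in atTop, ∫ t in Set.Ioi 0, G y t = ∫ t in 0..y, exp (-2 * (φ y - φ t)) • g t := by
    filter_upwards [eventually_ge_atTop 0] with y hy
    rw [setIntegral_indicator measurableSet_Iic, Set.Ioi_inter_Iic,
      intervalIntegral.integral_of_le hy]
  refine Tendsto.congr' hG ?_
  rw [← integral_zero ℝ E]
  refine tendsto_integral_filter_of_dominated_convergence (fun t => ‖g t‖)
    (Eventually.of_forall fun y => ?_) (Eventually.of_forall fun y => ?_) hg.norm ?_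
  · have hφmeas : ContinuousOn (fun t => exp (-2 * (φ y - φ t))) (Set.Ioi 0) :=
      continuous_exp.comp_continuousOn (continuousOn_const.mul
        (continuousOn_const.sub (hφ.continuousOn.mono Set.Ioi_subset_Ici_self)))
    exact ((hφmeas.aestronglyMeasurable measurableSet_Ioi).smul
      hg.aestronglyMeasurable).indicator measurableSet_Iic
  · filter_upwards [ae_restrict_mem measurableSet_Ioi] with t ht
    by_cases hty : t ∈ Set.Iic y
    · simpa only [G, Set.indicator_of_mem hty] using hφ.norm_exp_smul_le ht.out.le hty (g t)
    · simpa only [G, Set.indicator_of_notMem hty, norm_zero] using norm_nonneg (g t)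
  · refine Eventually.of_forall fun t => ?_
    have hlim := (hφ.tendsto_exp_atTop_zero t).smul_const (g t)
    rw [zero_smul] at hlim
    refine hlim.congr' ?_
    filter_upwards [eventually_ge_atTop t] with y hy
    simp only [G, Set.indicator_of_mem (Set.mem_Iic.2 hy)]

end IsPhase

theorem isPhase_rpow {β γ : ℝ} (hβ : 0 < β) (hγ : γ < 1) :
    IsPhase (fun t => β / t ^ γ) fun x => β * x ^ (1 - γ) / (1 - γ) := by
  have hγ' : 0 < 1 - γ := sub_pos.2 hγ
  have hrate : ∀ t, 0 ≤ t → β / t ^ γ = β * t ^ (-γ) := fun t ht => by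
    rw [rpow_neg ht, div_eq_mul_inv]
  have hint : ∀ x y : ℝ, 0 ≤ x → 0 ≤ y → IntervalIntegrable (fun t => β / t ^ γ) volume x y :=
    fun x y hx hy => ((intervalIntegral.intervalIntegrable_rpow' (neg_lt_neg hγ)).const_mul
      β).congr fun t ht => (hrate t (ht.1.le.trans' (le_min hx hy))).symm
  refine ⟨?_, fun x hx => ?_, fun x hx y _ hxy => ?_, ?_⟩
  · rw [locallyIntegrableOn_iff isClosed_Ici.isLocallyClosed]
    intro K hK hKc
    obtain ⟨c, hc⟩ := hKc.bddAbove
    have hsub : K ⊆ Set.Icc 0 c := fun x hx => ⟨hK hx, hc hx⟩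
    rcases K.eq_empty_or_nonempty with rfl | ⟨z, hz⟩
    · exact integrableOn_empty
    · have hc₀ : 0 ≤ c := (hsub hz).1.trans (hsub hz).2
      exact ((intervalIntegrable_iff_integrableOn_Icc_of_le hc₀).1
        (hint 0 c le_rfl hc₀)).mono_set hsub
  · have hcongr : ∫ t in 0..x, β / t ^ γ = ∫ t in 0..x, β * t ^ (-γ) :=
      intervalIntegral.integral_congr fun t ht => hrate t (Set.uIcc_of_le hx ▸ ht).1
    rw [hcongr, intervalIntegral.integral_const_mul, integral_rpow (Or.inl (neg_lt_neg hγ)),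
      neg_add_eq_sub, zero_rpow hγ'.ne', sub_zero, mul_div_assoc]
  · have hx' : 0 ≤ x := hx
    gcongr
  · exact ((tendsto_rpow_atTop hγ').const_mul_atTop hβ).atTop_div_const hγ'

end Phase

section Dichotomy

variable {𝕜 E : Type*} [RCLike 𝕜] [NormedAddCommGroup E] [NormedSpace 𝕜 E] [NormedSpace ℝ E]

/-- The solution `u` measured against the growing mode `exp φ`. -/
noncomputable def rescale (φ : ℝ → ℝ) (u : ℝ → E) (x : ℝ) : E := exp (-φ x) • u x

theorem rescale_zero {a φ : ℝ → ℝ} (hφ : IsPhase a φ) (u : ℝ → E) : rescale φ u 0 = u 0 := by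
  rw [rescale, hφ.apply_zero, neg_zero, exp_zero, one_smul]

variable [IsScalarTower ℝ 𝕜 E]

/-- The coefficient of a system with growth rate `a` on the range of the projection `P`, decay rate
`a` on its kernel, and perturbation `R`; `P - (1 - P)` is the `diag(1, -1)` of the planar system. -/
noncomputable def dichotomousCoefficient (P : E →L[𝕜] E) (a : ℝ → ℝ) (R : ℝ → E →L[𝕜] E) (t : ℝ) :
    E →L[𝕜] E := a t • (P - (1 - P)) + R t

variable {P : E →L[𝕜] E} {a φ : ℝ → ℝ} {R : ℝ → E →L[𝕜] E} {u : ℝ → E} {x y : ℝ}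

theorem locallyIntegrableOn_dichotomousCoefficient (ha : LocallyIntegrableOn a (Set.Ici 0))
    (hR : IntegrableOn R (Set.Ioi 0)) :
    LocallyIntegrableOn (dichotomousCoefficient P a R) (Set.Ici 0) := by
  have hRloc : LocallyIntegrableOn R (Set.Ici 0) :=
    IntegrableOn.locallyIntegrableOn (hR.congr_set_ae Ioi_ae_eq_Ici.symm)
  have haP : LocallyIntegrableOn (fun t => a t • (P - (1 - P))) (Set.Ici 0) := fun x hx => by
    obtain ⟨s, hs, has⟩ := ha x hx
    exact ⟨s, hs, has.smul_const _⟩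
  exact LocallyIntegrableOn.add (ε'' := E →L[𝕜] E) haP hRloc

variable [CompleteSpace E]

theorem exp_neg_smul_clm_apply_eq_add_integral (hφ : IsPhase a φ) (hR : IntegrableOn R (Set.Ioi 0))
    (hu : IsIntegralSolution (dichotomousCoefficient P a R) u) (L : E →L[𝕜] E) {σ : ℝ}
    (hL : L * (P - (1 - P)) = σ • L) (hx : 0 ≤ x) (hy : 0 ≤ y) :
    exp (-(σ * φ y)) • L (u y) =
      exp (-(σ * φ x)) • L (u x) + ∫ t in x..y, exp (-(σ * φ t)) • L (R t (u t)) := by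
  have hA := locallyIntegrableOn_dichotomousCoefficient (P := P) hφ.locallyIntegrableOn hR
  have hz : ∀ {z}, z ∈ Set.uIcc x y → 0 ≤ z := fun hz => (le_min hx hy).trans hz.1
  have hLA : ∀ t, L (dichotomousCoefficient P a R t (u t)) =
      (σ * a t) • L (u t) + L (R t (u t)) := fun t => by
    have hLu := DFunLike.congr_fun hL (u t)
    simp only [mul_apply_eq_comp, smul_apply] at hLu
    rw [dichotomousCoefficient, add_apply, map_add,
      smul_apply, L.map_smul_of_tower, hLu, smul_smul, mul_comm]
  have hint : ∀ z, 0 ≤ z → IntervalIntegrable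
      (fun t => dichotomousCoefficient P a R t (u t)) volume x z := fun z hz =>
    hu.intervalIntegrable hA hx hz
  refine exp_neg_smul_eq_add_integral (φ := fun z => σ * φ z) (n := fun t => σ * a t)
    (W := fun z => L (u z)) ((hφ.intervalIntegrable hx hy).const_mul σ) (fun z hz' => ?_) ?_
    fun z hz' => ?_
  · rw [intervalIntegral.integral_const_mul, ← mul_add, ← hφ.eq_add_integral hx (hz hz')]
  · simp only [← hLA]
    exact ⟨L.integrable_comp (hint y hy).1, L.integrable_comp (hint y hy).2⟩
  · simp only [← hLA]
    rw [L.intervalIntegral_comp_comm (hint z (hz hz')), ← map_add, ← hu x z hx (hz hz')]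

theorem growing_rescale_eq_add_integral (hφ : IsPhase a φ) (hP : IsIdempotentElem P)
    (hR : IntegrableOn R (Set.Ioi 0)) (hu : IsIntegralSolution (dichotomousCoefficient P a R) u)
    (hx : 0 ≤ x) (hy : 0 ≤ y) :
    P (rescale φ u y) = P (rescale φ u x) + ∫ t in x..y, P (R t (rescale φ u t)) := by
  have hL : P * (P - (1 - P)) = (1 : ℝ) • P := by
    rw [mul_sub, hP.mul_one_sub_self, sub_zero, hP.eq, one_smul]
  simpa only [rescale, one_mul, ContinuousLinearMap.map_smul_of_tower] using
    exp_neg_smul_clm_apply_eq_add_integral hφ hR hu P hL hx hy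

theorem decaying_rescale_eq_add_integral (hφ : IsPhase a φ) (hP : IsIdempotentElem P)
    (hR : IntegrableOn R (Set.Ioi 0)) (hu : IsIntegralSolution (dichotomousCoefficient P a R) u)
    (hx : 0 ≤ x) (hy : 0 ≤ y) :
    (1 - P) (rescale φ u y) = exp (-2 * (φ y - φ x)) • (1 - P) (rescale φ u x) +
      ∫ t in x..y, exp (-2 * (φ y - φ t)) • (1 - P) (R t (rescale φ u t)) := by
  have hL : (1 - P) * (P - (1 - P)) = (-1 : ℝ) • (1 - P) := by
    rw [mul_sub, hP.one_sub_mul_self, zero_sub, hP.one_sub.eq, neg_one_smul]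
  have h := congrArg (exp (-2 * φ y) • ·)
    (exp_neg_smul_clm_apply_eq_add_integral hφ hR hu (1 - P) hL hx hy)
  have hexp : ∀ s z, exp (-2 * φ y) • exp (-(-1 * φ s)) • (1 - P) z =
      exp (-2 * (φ y - φ s)) • exp (-φ s) • (1 - P) z := fun s z => by
    rw [smul_smul, smul_smul, ← exp_add, ← exp_add]
    ring_nf
  simp only [smul_add, ← intervalIntegral.integral_smul, hexp, sub_self, mul_zero, exp_zero,
    one_smul] at h
  simpa only [rescale, ContinuousLinearMap.map_smul_of_tower] using h

end Dichotomy

section Boundedness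

variable {𝕜 E : Type*} [RCLike 𝕜] [NormedAddCommGroup E] [NormedSpace 𝕜 E]

/-- The constant that Grönwall's inequality gives for the growth of a solution relative to `exp φ`,
uniformly in the starting point. -/
noncomputable def dichotomyBound (P : E →L[𝕜] E) (R : ℝ → E →L[𝕜] E) : ℝ :=
  (‖P‖ + ‖1 - P‖) * exp ((‖P‖ + ‖1 - P‖) * ∫ t in Set.Ioi 0, ‖R t‖)

variable [NormedSpace ℝ E] [IsScalarTower ℝ 𝕜 E]
  {P : E →L[𝕜] E} {a φ : ℝ → ℝ} {R : ℝ → E →L[𝕜] E} {u : ℝ → E} {x y : ℝ}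

theorem continuousOn_rescale (hφ : IsPhase a φ) (hR : IntegrableOn R (Set.Ioi 0))
    (hu : IsIntegralSolution (dichotomousCoefficient P a R) u) :
    ContinuousOn (rescale φ u) (Set.Ici 0) :=
  (continuous_exp.comp_continuousOn hφ.continuousOn.neg).smul
    (hu.continuousOn (locallyIntegrableOn_dichotomousCoefficient hφ.locallyIntegrableOn hR))

variable [CompleteSpace E] (hφ : IsPhase a φ) (hP : IsIdempotentElem P)
  (hR : IntegrableOn R (Set.Ioi 0)) (hu : IsIntegralSolution (dichotomousCoefficient P a R) u)
include hφ hP hR hu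

theorem norm_rescale_le_add_integral (hx : 0 ≤ x) (hxy : x ≤ y) :
    ‖rescale φ u y‖ ≤ (‖P‖ + ‖1 - P‖) * ‖rescale φ u x‖ +
      ∫ t in x..y, (‖P‖ + ‖1 - P‖) * ‖R t‖ * ‖rescale φ u t‖ := by
  have hy : 0 ≤ y := hx.trans hxy
  have hnorm : IntervalIntegrable (fun t => ‖R t‖ * ‖rescale φ u t‖) volume x y :=
    (((intervalIntegrable_iff_integrableOn_Ioc_of_le hxy).2 (hR.mono_set
      (Set.Ioc_subset_Ioi_self.trans (Set.Ioi_subset_Ioi hx)))).norm).mul_continuousOn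
      ((continuousOn_rescale hφ hR hu).norm.mono (Set.ordConnected_Ici.uIcc_subset hx hy))
  have hintegrand : ∀ (Q : E →L[𝕜] E) t,
      ‖Q (R t (rescale φ u t))‖ ≤ ‖Q‖ * (‖R t‖ * ‖rescale φ u t‖) := fun Q t =>
    Q.le_opNorm_of_le ((R t).le_opNorm _)
  have hgrow_le : ‖P (rescale φ u y)‖ ≤
      ‖P‖ * ‖rescale φ u x‖ + ∫ t in x..y, ‖P‖ * (‖R t‖ * ‖rescale φ u t‖) := by
    rw [growing_rescale_eq_add_integral hφ hP hR hu hx hy]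
    refine (norm_add_le _ _).trans (add_le_add (P.le_opNorm _) ?_)
    exact intervalIntegral.norm_integral_le_of_norm_le hxy
      (Eventually.of_forall fun t _ => hintegrand P t) (hnorm.const_mul _)
  have hdecay_le : ‖(1 - P) (rescale φ u y)‖ ≤
      ‖1 - P‖ * ‖rescale φ u x‖ + ∫ t in x..y, ‖1 - P‖ * (‖R t‖ * ‖rescale φ u t‖) := by
    rw [decaying_rescale_eq_add_integral hφ hP hR hu hx hy]
    refine (norm_add_le _ _).trans (add_le_add ?_ ?_)
    · exact (hφ.norm_exp_smul_le hx hxy _).trans ((1 - P).le_opNorm _)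
    · exact intervalIntegral.norm_integral_le_of_norm_le hxy
        (Eventually.of_forall fun t ht => (hφ.norm_exp_smul_le (hx.trans ht.1.le) ht.2 _).trans
          (hintegrand (1 - P) t)) (hnorm.const_mul _)
  calc ‖rescale φ u y‖ = ‖P (rescale φ u y) + (1 - P) (rescale φ u y)‖ := by
        rw [← add_apply, add_sub_cancel, one_apply_eq_self]
    _ ≤ _ := (norm_add_le _ _).trans (add_le_add hgrow_le hdecay_le)
    _ = _ := by
        rw [add_add_add_comm, ← intervalIntegral.integral_add (hnorm.const_mul _)
          (hnorm.const_mul _), ← add_mul]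
        simp only [← add_mul, mul_assoc]

theorem norm_rescale_le (hx : 0 ≤ x) (hxy : x ≤ y) :
    ‖rescale φ u y‖ ≤ dichotomyBound P R * ‖rescale φ u x‖ := by
  have hRxy : IntegrableOn R (Set.Ioc x y) :=
    hR.mono_set (Set.Ioc_subset_Ioi_self.trans (Set.Ioi_subset_Ioi hx))
  have hgronwall := le_mul_exp_integral_of_le_add_integral hxy
    (((intervalIntegrable_iff_integrableOn_Ioc_of_le hxy).2 hRxy.norm).const_mul (‖P‖ + ‖1 - P‖))
    (fun t => by positivity)
    ((continuousOn_rescale hφ hR hu).norm.mono (Set.Icc_subset_Ici_self.trans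
      (Set.Ici_subset_Ici.2 hx)))
    fun z hz => norm_rescale_le_add_integral hφ hP hR hu hx hz.1
  have htail : ∫ t in x..y, ‖R t‖ ≤ ∫ t in Set.Ioi 0, ‖R t‖ := by
    rw [intervalIntegral.integral_of_le hxy]
    exact setIntegral_mono_set hR.norm (Eventually.of_forall fun t => norm_nonneg _)
      (Set.Ioc_subset_Ioi_self.trans (Set.Ioi_subset_Ioi hx)).eventuallyLE
  rw [intervalIntegral.integral_const_mul] at hgronwall
  refine hgronwall.trans ?_
  rw [dichotomyBound, mul_right_comm]
  gcongr

theorem integrableOn_clm_apply_rescale :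
    IntegrableOn (fun t => R t (rescale φ u t)) (Set.Ioi 0) := by
  refine (hR.norm.mul_const (dichotomyBound P R * ‖rescale φ u 0‖)).mono'
    ((ContinuousLinearMap.id 𝕜 _).aestronglyMeasurable_comp₂ hR.aestronglyMeasurable
      (((continuousOn_rescale hφ hR hu).mono Set.Ioi_subset_Ici_self).aestronglyMeasurable
        measurableSet_Ioi)) ?_
  filter_upwards [ae_restrict_mem measurableSet_Ioi] with t ht
  exact (R t).le_opNorm_of_le (norm_rescale_le hφ hP hR hu le_rfl ht.out.le)

theorem tendsto_growing_rescale (hx : 0 ≤ x) :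
    Tendsto (fun y => P (rescale φ u y)) atTop
      (𝓝 (P (rescale φ u x + ∫ t in Set.Ioi x, R t (rescale φ u t)))) := by
  have hint : IntegrableOn (fun t => R t (rescale φ u t)) (Set.Ioi x) :=
    (integrableOn_clm_apply_rescale hφ hP hR hu).mono_set (Set.Ioi_subset_Ioi hx)
  rw [map_add, ← P.integral_comp_comm hint]
  refine ((intervalIntegral_tendsto_integral_Ioi x (P.integrable_comp hint)
    tendsto_id).const_add _).congr' ?_
  filter_upwards [eventually_ge_atTop x] with y hxy
  exact (growing_rescale_eq_add_integral hφ hP hR hu hx (hx.trans hxy)).symm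

theorem tendsto_decaying_rescale :
    Tendsto (fun y => (1 - P) (rescale φ u y)) atTop (𝓝 0) := by
  have hlim := ((hφ.tendsto_exp_atTop_zero 0).smul_const ((1 - P) (rescale φ u 0))).add
    (hφ.tendsto_integral_exp_smul_zero
      ((1 - P).integrable_comp (integrableOn_clm_apply_rescale hφ hP hR hu)))
  rw [zero_smul, zero_add] at hlim
  refine hlim.congr' ?_
  filter_upwards [eventually_ge_atTop 0] with y hy
  exact (decaying_rescale_eq_add_integral hφ hP hR hu le_rfl hy).symm

theorem tendsto_rescale (hx : 0 ≤ x) :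
    Tendsto (rescale φ u) atTop
      (𝓝 (P (rescale φ u x + ∫ t in Set.Ioi x, R t (rescale φ u t)))) := by
  simpa only [← add_apply, add_sub_cancel, one_apply_eq_self, add_zero] using
    (tendsto_growing_rescale hφ hP hR hu hx).add (tendsto_decaying_rescale hφ hP hR hu)

end Boundedness

section GrowingMode

variable {𝕜 E : Type*} [RCLike 𝕜] [NormedAddCommGroup E] [NormedSpace 𝕜 E] [NormedSpace ℝ E]
  [IsScalarTower ℝ 𝕜 E] {P : E →L[𝕜] E} {a φ : ℝ → ℝ} {R : ℝ → E →L[𝕜] E} {u : ℝ → E}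

variable [CompleteSpace E]

theorem norm_apply_integral_rescale_le (hφ : IsPhase a φ) (hP : IsIdempotentElem P)
    (hR : IntegrableOn R (Set.Ioi 0)) (hu : IsIntegralSolution (dichotomousCoefficient P a R) u)
    {x : ℝ} (hx : 0 ≤ x) :
    ‖P (∫ t in Set.Ioi x, R t (rescale φ u t))‖ ≤
      ‖P‖ * dichotomyBound P R * (∫ t in Set.Ioi x, ‖R t‖) * ‖rescale φ u x‖ := by
  have hRx : IntegrableOn R (Set.Ioi x) := hR.mono_set (Set.Ioi_subset_Ioi hx)
  have hintegral : ‖∫ t in Set.Ioi x, R t (rescale φ u t)‖ ≤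
      ∫ t in Set.Ioi x, ‖R t‖ * (dichotomyBound P R * ‖rescale φ u x‖) := by
    refine norm_integral_le_of_norm_le (hRx.norm.mul_const _) ?_
    filter_upwards [ae_restrict_mem measurableSet_Ioi] with t ht
    exact (R t).le_opNorm_of_le (norm_rescale_le hφ hP hR hu hx ht.out.le)
  refine (P.le_opNorm_of_le hintegral).trans_eq ?_
  rw [integral_mul_const]
  ring

theorem exists_isIntegralSolution_apply_add_integral_ne_zero (hφ : IsPhase a φ)
    (hP : IsIdempotentElem P) (hP₀ : P ≠ 0) (hR : IntegrableOn R (Set.Ioi 0)) :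
    ∃ u, IsIntegralSolution (dichotomousCoefficient P a R) u ∧
      P (u 0 + ∫ t in Set.Ioi 0, R t (rescale φ u t)) ≠ 0 := by
  obtain ⟨z, hz⟩ : ∃ z, P z ≠ 0 := by
    by_contra! h
    exact hP₀ (ContinuousLinearMap.ext h)
  -- Beyond `x` the remaining mass of `R` is too small to cancel the growing component of a solution
  -- that starts there in the growing direction.
  obtain ⟨x, hx_tail, hx⟩ : ∃ x : ℝ,
      ‖P‖ * dichotomyBound P R * (∫ t in Set.Ioi x, ‖R t‖) < 1 ∧ 0 ≤ x := by
    have htail : Tendsto (fun x => ∫ t in Set.Ioi x, ‖R t‖) atTop (𝓝 0) :=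
      tendsto_integral_Ioi_zero tendsto_id
    have hlim := htail.const_mul (‖P‖ * dichotomyBound P R)
    rw [mul_zero] at hlim
    exact ((hlim.eventually_lt_const one_pos).and (eventually_ge_atTop 0)).exists
  obtain ⟨u, hu, hux⟩ := exists_isIntegralSolution
    (locallyIntegrableOn_dichotomousCoefficient hφ.locallyIntegrableOn hR) x (P z)
  refine ⟨u, hu, ?_⟩
  have hgrowing : P (rescale φ u x) = rescale φ u x := by
    rw [rescale, hux, P.map_smul_of_tower, ← mul_apply_eq_comp, hP.eq]
  have hne : 0 < ‖rescale φ u x‖ := by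
    rw [rescale, hux]
    exact norm_pos_iff.2 (smul_ne_zero (exp_pos _).ne' hz)
  rw [← rescale_zero hφ u, tendsto_nhds_unique (tendsto_rescale hφ hP hR hu le_rfl)
    (tendsto_rescale hφ hP hR hu hx), map_add, hgrowing]
  intro hzero
  have hnorm := norm_apply_integral_rescale_le hφ hP hR hu hx
  rw [← neg_eq_of_add_eq_zero_right hzero, norm_neg] at hnorm
  exact hnorm.not_gt (mul_lt_of_lt_one_left hne hx_tail)

end GrowingMode

section GrowthFunctional

theorem isIdempotentElem_smulRight {𝕜 E : Type*} [RCLike 𝕜] [NormedAddCommGroup E]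
    [NormedSpace 𝕜 E] {ℓ : E →L[𝕜] 𝕜} {e : E} (he : ℓ e = 1) :
    IsIdempotentElem (ℓ.smulRight e) := by
  ext z
  simp [he]

variable {𝕜 E : Type*} [RCLike 𝕜] [NormedAddCommGroup E] [NormedSpace 𝕜 E] [NormedSpace ℝ E]
  {a φ : ℝ → ℝ} {ℓ : E →L[𝕜] 𝕜} {e : E} {R : ℝ → E →L[𝕜] E} {u v : ℝ → E}

/-- The value `Φ(u(0))` of the growing-mode functional, as an integral formula in the solution `u`;
`ℓ` is the coordinate along the growing direction. -/
noncomputable def growthCoefficient (ℓ : E →L[𝕜] 𝕜) (φ : ℝ → ℝ) (R : ℝ → E →L[𝕜] E)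
    (u : ℝ → E) : 𝕜 :=
  ℓ (u 0 + ∫ t in Set.Ioi 0, R t (rescale φ u t))

variable [IsScalarTower ℝ 𝕜 E] [CompleteSpace E]

theorem tendsto_rescale_growthCoefficient (hφ : IsPhase a φ) (he : ℓ e = 1)
    (hR : IntegrableOn R (Set.Ioi 0))
    (hu : IsIntegralSolution (dichotomousCoefficient (ℓ.smulRight e) a R) u) :
    Tendsto (rescale φ u) atTop (𝓝 (growthCoefficient ℓ φ R u • e)) := by
  simpa only [rescale_zero hφ, ContinuousLinearMap.smulRight_apply, growthCoefficient] using
    tendsto_rescale hφ (isIdempotentElem_smulRight he) hR hu le_rfl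

theorem tendsto_apply_rescale_growthCoefficient (hφ : IsPhase a φ) (he : ℓ e = 1)
    (hR : IntegrableOn R (Set.Ioi 0))
    (hu : IsIntegralSolution (dichotomousCoefficient (ℓ.smulRight e) a R) u) :
    Tendsto (fun x => ℓ (rescale φ u x)) atTop (𝓝 (growthCoefficient ℓ φ R u)) := by
  simpa only [map_smul, he, smul_eq_mul, mul_one, Function.comp_def] using
    (ℓ.continuous.tendsto _).comp (tendsto_rescale_growthCoefficient hφ he hR hu)

theorem growthCoefficient_add (hφ : IsPhase a φ) (he : ℓ e = 1) (hR : IntegrableOn R (Set.Ioi 0))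
    (hu : IsIntegralSolution (dichotomousCoefficient (ℓ.smulRight e) a R) u)
    (hv : IsIntegralSolution (dichotomousCoefficient (ℓ.smulRight e) a R) v) :
    growthCoefficient ℓ φ R (u + v) = growthCoefficient ℓ φ R u + growthCoefficient ℓ φ R v := by
  have huv := hu.add hv (locallyIntegrableOn_dichotomousCoefficient hφ.locallyIntegrableOn hR)
  refine tendsto_nhds_unique (tendsto_apply_rescale_growthCoefficient hφ he hR huv) ?_
  simpa only [rescale, Pi.add_apply, smul_add, map_add] using
    (tendsto_apply_rescale_growthCoefficient hφ he hR hu).add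
      (tendsto_apply_rescale_growthCoefficient hφ he hR hv)

theorem growthCoefficient_smul (hφ : IsPhase a φ) (he : ℓ e = 1) (hR : IntegrableOn R (Set.Ioi 0))
    (hu : IsIntegralSolution (dichotomousCoefficient (ℓ.smulRight e) a R) u) (c : 𝕜) :
    growthCoefficient ℓ φ R (c • u) = c • growthCoefficient ℓ φ R u := by
  refine tendsto_nhds_unique (tendsto_apply_rescale_growthCoefficient hφ he hR (hu.smul c)) ?_
  simpa only [rescale, Pi.smul_apply, smul_comm _ c, map_smul] using
    (tendsto_apply_rescale_growthCoefficient hφ he hR hu).const_smul c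

theorem norm_growthCoefficient_le (hφ : IsPhase a φ) (he : ℓ e = 1)
    (hR : IntegrableOn R (Set.Ioi 0))
    (hu : IsIntegralSolution (dichotomousCoefficient (ℓ.smulRight e) a R) u) :
    ‖growthCoefficient ℓ φ R u‖ ≤ ‖ℓ‖ * dichotomyBound (ℓ.smulRight e) R * ‖u 0‖ := by
  refine le_of_tendsto (tendsto_apply_rescale_growthCoefficient hφ he hR hu).norm ?_
  filter_upwards [eventually_ge_atTop 0] with x hx
  rw [mul_assoc, ← rescale_zero hφ u]
  exact ℓ.le_opNorm_of_le (norm_rescale_le hφ (isIdempotentElem_smulRight he) hR hu le_rfl hx)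

theorem growthCoefficient_congr (hφ : IsPhase a φ) (he : ℓ e = 1)
    (hR : IntegrableOn R (Set.Ioi 0))
    (hu : IsIntegralSolution (dichotomousCoefficient (ℓ.smulRight e) a R) u)
    (hv : IsIntegralSolution (dichotomousCoefficient (ℓ.smulRight e) a R) v) (huv : u 0 = v 0) :
    growthCoefficient ℓ φ R u = growthCoefficient ℓ φ R v := by
  have hA := locallyIntegrableOn_dichotomousCoefficient (P := ℓ.smulRight e)
    hφ.locallyIntegrableOn hR
  have hdiff := norm_growthCoefficient_le hφ he hR (hu.add (hv.smul (-1)) hA)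
  rw [growthCoefficient_add hφ he hR hu (hv.smul (-1)), growthCoefficient_smul hφ he hR hv] at hdiff
  simpa [huv, ← sub_eq_add_neg, sub_eq_zero] using hdiff

theorem exists_clm_apply_zero_eq_growthCoefficient (hφ : IsPhase a φ) (he : ℓ e = 1)
    (hR : IntegrableOn R (Set.Ioi 0)) :
    ∃ Φ : E →L[𝕜] 𝕜, ∀ u, IsIntegralSolution (dichotomousCoefficient (ℓ.smulRight e) a R) u →
      Φ (u 0) = growthCoefficient ℓ φ R u := by
  have hA := locallyIntegrableOn_dichotomousCoefficient (P := ℓ.smulRight e)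
    hφ.locallyIntegrableOn hR
  choose U hU hU₀ using exists_isIntegralSolution hA 0
  have hcongr : ∀ {u f}, IsIntegralSolution (dichotomousCoefficient (ℓ.smulRight e) a R) u →
      u 0 = f → growthCoefficient ℓ φ R (U f) = growthCoefficient ℓ φ R u := fun hu huf =>
    growthCoefficient_congr hφ he hR (hU _) hu ((hU₀ _).trans huf.symm)
  let Φ : E →ₗ[𝕜] 𝕜 :=
    { toFun := fun f => growthCoefficient ℓ φ R (U f)
      map_add' := fun f g => by
        rw [hcongr ((hU f).add (hU g) hA) (by simp [hU₀]),
          growthCoefficient_add hφ he hR (hU f) (hU g)]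
      map_smul' := fun c f => by
        rw [hcongr ((hU f).smul c) (by simp [hU₀]), growthCoefficient_smul hφ he hR (hU f),
          RingHom.id_apply] }
  refine ⟨Φ.mkContinuous (‖ℓ‖ * dichotomyBound (ℓ.smulRight e) R) fun f => ?_, fun u hu => ?_⟩
  · exact (norm_growthCoefficient_le hφ he hR (hU f)).trans_eq (by rw [hU₀])
  · exact hcongr hu rfl

theorem growing_mode_functional_general (hφ : IsPhase a φ) (he : ℓ e = 1)
    (hR : IntegrableOn R (Set.Ioi 0)) :
    ∃ Φ : E →L[𝕜] 𝕜, Φ ≠ 0 ∧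
      ∀ u, IsIntegralSolution (dichotomousCoefficient (ℓ.smulRight e) a R) u →
        Tendsto (fun x => exp (-φ x) • u x) atTop (𝓝 (Φ (u 0) • e)) ∧
          Φ (u 0) = ℓ (u 0 + ∫ x in Set.Ioi 0, exp (-φ x) • R x (u x)) := by
  obtain ⟨Φ, hΦ⟩ := exists_clm_apply_zero_eq_growthCoefficient hφ he hR
  have hP₀ : ℓ.smulRight e ≠ 0 := fun h => by
    have hee : e = 0 := by simpa [he] using DFunLike.congr_fun h e
    simp [hee] at he
  refine ⟨Φ, ?_, fun u hu => ⟨?_, ?_⟩⟩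
  · rintro rfl
    obtain ⟨u, hu, hne⟩ := exists_isIntegralSolution_apply_add_integral_ne_zero hφ
      (isIdempotentElem_smulRight he) hP₀ hR
    refine hne ?_
    rw [ContinuousLinearMap.smulRight_apply, ← growthCoefficient, ← hΦ u hu, zero_apply, zero_smul]
  · rw [hΦ u hu]
    exact tendsto_rescale_growthCoefficient hφ he hR hu
  · simp only [hΦ u hu, growthCoefficient, rescale, ContinuousLinearMap.map_smul_of_tower]

end GrowthFunctional

section Matrix

theorem integrable_mulVecLin_toContinuousLinearMap {𝕜 α m n : Type*} [RCLike 𝕜]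
    [MeasurableSpace α] {μ : Measure α} [Fintype m] [Fintype n] {M : α → Matrix m n 𝕜}
    (hM : ∀ i j, Integrable (fun x => M x i j) μ) :
    Integrable (fun x => (M x).mulVecLin.toContinuousLinearMap) μ := by
  let L : (m → n → 𝕜) →ₗ[𝕜] ((n → 𝕜) →L[𝕜] (m → 𝕜)) :=
    LinearMap.toContinuousLinearMap.toLinearMap ∘ₗ (Matrix.mulVecBilin 𝕜 𝕜)
  exact L.toContinuousLinearMap.integrable_comp
    (Integrable.of_eval fun i => Integrable.of_eval fun j => hM i j)

theorem dichotomousCoefficient_proj_apply (a : ℝ → ℝ) (R : ℝ → Matrix (Fin 2) (Fin 2) ℂ) (t : ℝ)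
    (z : Fin 2 → ℂ) :
    dichotomousCoefficient ((.proj 0 : (Fin 2 → ℂ) →L[ℂ] ℂ).smulRight ![1, 0]) a
        (fun s => (R s).mulVecLin.toContinuousLinearMap) t z =
      ((a t : ℂ) • (!![1, 0; 0, -1] : Matrix (Fin 2) (Fin 2) ℂ) + R t).mulVec z := by
  ext i
  fin_cases i <;> simp [dichotomousCoefficient, Matrix.add_mulVec, Matrix.vecHead]

end Matrix

/-- Every solution of the dichotomous system converges to a multiple of the growing
mode: there is a linear functional `Φ` on `ℂ²` with one-dimensional kernel such that
the solution with initial value `f` at `0` satisfies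
`u(x) = exp(β x^{1−γ}/(1−γ))(Φ(f) e₊ + o(1))`, and `Φ` is given by the stated
integral formula (first component of `f + ∫₀^∞ e^{−φ} R u`). -/
theorem growing_mode_functional (β γ : ℝ) (hβ : 0 < β) (hγ : γ ∈ Set.Ioo (1/2:ℝ) 1)
    (R : ℝ → Matrix (Fin 2) (Fin 2) ℂ)
    (hRmeas : ∀ i j, Measurable fun x => R x i j)
    (hRint : ∀ i j, IntegrableOn (fun x => R x i j) (Set.Ioi 0)) :
    ∃ Φ : (Fin 2 → ℂ) →ₗ[ℂ] ℂ, Module.finrank ℂ (LinearMap.ker Φ) = 1 ∧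
      ∀ f : Fin 2 → ℂ, ∀ u : ℝ → (Fin 2 → ℂ),
        u 0 = f →
        (∀ x y : ℝ, 0 ≤ x → 0 ≤ y →
          u y = u x + ∫ t in x..y,
            ((((β / t ^ γ : ℝ) : ℂ) • (!![1,0;0,-1] : Matrix (Fin 2) (Fin 2) ℂ) + R t)).mulVec (u t)) →
        (Tendsto (fun x => ((Real.exp (-(β * x ^ (1-γ) / (1-γ))) : ℝ) : ℂ) • u x)
            atTop (𝓝 (Φ f • ![1,0])) ∧
          Φ f = (f + ∫ x in Set.Ioi (0:ℝ),
            ((Real.exp (-(β * x ^ (1-γ) / (1-γ))) : ℝ) : ℂ) • (R x).mulVec (u x)) 0) := by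
  obtain ⟨Φ, hΦ, hgrow⟩ := growing_mode_functional_general (isPhase_rpow hβ hγ.2)
    (ℓ := (.proj 0 : (Fin 2 → ℂ) →L[ℂ] ℂ)) (e := ![1, 0]) rfl
    (integrable_mulVecLin_toContinuousLinearMap hRint)
  refine ⟨Φ, ?_, ?_⟩
  · simpa using Module.Dual.finrank_ker_add_one_of_ne_zero
      fun h : (Φ : (Fin 2 → ℂ) →ₗ[ℂ] ℂ) = 0 => hΦ (ContinuousLinearMap.coe_inj.1 h)
  · rintro f u rfl hu
    simp only [Complex.coe_smul]
    refine hgrow u fun x y hx hy => ?_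
    simpa only [dichotomousCoefficient_proj_apply] using hu x y hx hy
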